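/- Let L ∈ ℝ^{N×N} be the Laplacian of a connected weighted undirected graph (L symmetric, positive semidefinite, L𝟙_N = 0, with 0 a simple eigenvalue), and let M ∈ ℝ^{N×m} have columns e_{v₁},…,e_{v_m} for distinct leader nodes v₁,…,v_m. Let π = {C₁,…,C_k} be an almost equitable partition with characteristic matrix P (L(Im P) ⊆ Im P), L̂ = (PᵀP)⁻¹PᵀLP, M̂ = (PᵀP)⁻¹PᵀM, and let C_{k_i} denote the cell containing v_i. Define S(s) = L(sI + L)⁻¹M and Ŝ(s) = LP(sI + L̂)⁻¹M̂. Then sup_{ω∈ℝ} σ_max(S(iω) − Ŝ(iω))² equals max_{1≤i≤m}(1 − 1/|C_{k_i}|) if all leaders lie in distinct cells, and equals 1 if at least two leaders lie in the same cell. -/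

import Mathlib

open Matrix Filter Topology Function
open scoped Kronecker

noncomputable section

/-- Complexification of a real matrix. -/
def cplx {α β : Type*} (M : Matrix α β ℝ) : Matrix α β ℂ := M.map Complex.ofReal

/-- Transfer function `S(s) = C (sI - A)⁻¹ B` of the system `ẋ = Ax + Bu, y = Cx`. -/
def transfer {n m p : ℕ} (A : Matrix (Fin n) (Fin n) ℝ) (B : Matrix (Fin n) (Fin m) ℝ)
    (C : Matrix (Fin p) (Fin n) ℝ) (s : ℂ) : Matrix (Fin p) (Fin m) ℂ :=
  cplx C * (s • (1 : Matrix (Fin n) (Fin n) ℂ) - cplx A)⁻¹ * cplx B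

/-- Squared H₂-norm: `(1/2π) ∫ tr(S(-iω)ᵀ S(iω)) dω`. -/
def H2normSq {α β : Type*} [Fintype α] [Fintype β] (S : ℂ → Matrix α β ℂ) : ℝ :=
  (1 / (2 * Real.pi)) *
    ∫ ω : ℝ, ((S (-((ω : ℂ) * Complex.I)))ᵀ * S ((ω : ℂ) * Complex.I)).trace.re

/-- Largest singular value of a complex matrix (its ℓ²-operator norm). -/
def sigmaMax {α β : Type*} [Fintype α] [Fintype β] [DecidableEq β] (M : Matrix α β ℂ) : ℝ :=
  ‖LinearMap.toContinuousLinearMap (Matrix.toEuclideanLin M)‖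

/-- Smallest singular value of a complex matrix: `√(λ_min(Mᴴ M))`. -/
def sigmaMinC {α β : Type*} [Fintype α] [Fintype β] [DecidableEq β] (M : Matrix α β ℂ) : ℝ :=
  Real.sqrt (sInf (spectrum ℝ (Mᴴ * M)))

/-- H∞-norm: `sup_{ω ∈ ℝ} σ_max(S(iω))`. -/
def HinfNorm {α β : Type*} [Fintype α] [Fintype β] [DecidableEq β] (S : ℂ → Matrix α β ℂ) : ℝ :=
  ⨆ ω : ℝ, sigmaMax (S ((ω : ℂ) * Complex.I))

/-- Generalized unstable subspace `X₊(A)`: direct sum of the generalized eigenspaces of (the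
complexification of) `A` corresponding to eigenvalues with nonnegative real part. -/
def unstableSubspace {n : ℕ} (A : Matrix (Fin n) (Fin n) ℝ) : Submodule ℂ (Fin n → ℂ) :=
  ⨆ μ ∈ {μ : ℂ | 0 ≤ μ.re}, Module.End.maxGenEigenspace (Matrix.toLin' (cplx A)) μ

/-- A complex square matrix is Hurwitz if all its eigenvalues have negative real part. -/
def IsHurwitz {n : ℕ} (M : Matrix (Fin n) (Fin n) ℂ) : Prop :=
  ∀ μ ∈ spectrum ℂ M, μ.re < 0

/-- Transfer function `S_λ(s) = λ (sI - A + λB)⁻¹ E` of the auxiliary system. -/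
def auxS {n r : ℕ} (A B : Matrix (Fin n) (Fin n) ℝ) (E : Matrix (Fin n) (Fin r) ℝ)
    (lam : ℝ) (s : ℂ) : Matrix (Fin n) (Fin r) ℂ :=
  (lam : ℂ) • ((s • (1 : Matrix (Fin n) (Fin n) ℂ) - cplx A + (lam : ℂ) • cplx B)⁻¹ * cplx E)

/-- Transfer function `S(s) = (L⊗Iₙ)(sI - I_N⊗A + L⊗B)⁻¹(M⊗E)` of the original network. -/
def netS {N n r m : ℕ} (L : Matrix (Fin N) (Fin N) ℝ) (A B : Matrix (Fin n) (Fin n) ℝ)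
    (E : Matrix (Fin n) (Fin r) ℝ) (M : Matrix (Fin N) (Fin m) ℝ) (s : ℂ) :
    Matrix (Fin N × Fin n) (Fin m × Fin r) ℂ :=
  cplx (L ⊗ₖ (1 : Matrix (Fin n) (Fin n) ℝ)) *
    (s • (1 : Matrix (Fin N × Fin n) (Fin N × Fin n) ℂ) -
      cplx ((1 : Matrix (Fin N) (Fin N) ℝ) ⊗ₖ A - L ⊗ₖ B))⁻¹ *
    cplx (M ⊗ₖ E)

/-- Transfer function `Ŝ(s) = (LP⊗Iₙ)(sI - I_k⊗A + L̂⊗B)⁻¹(M̂⊗E)` of the reduced network. -/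
def netShat {N n r m k : ℕ} (L : Matrix (Fin N) (Fin N) ℝ) (P : Matrix (Fin N) (Fin k) ℝ)
    (Lhat : Matrix (Fin k) (Fin k) ℝ) (Mhat : Matrix (Fin k) (Fin m) ℝ)
    (A B : Matrix (Fin n) (Fin n) ℝ) (E : Matrix (Fin n) (Fin r) ℝ) (s : ℂ) :
    Matrix (Fin N × Fin n) (Fin m × Fin r) ℂ :=
  cplx ((L * P) ⊗ₖ (1 : Matrix (Fin n) (Fin n) ℝ)) *
    (s • (1 : Matrix (Fin k × Fin n) (Fin k × Fin n) ℂ) -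
      cplx ((1 : Matrix (Fin k) (Fin k) ℝ) ⊗ₖ A - Lhat ⊗ₖ B))⁻¹ *
    cplx (Mhat ⊗ₖ E)

/-- Transfer function `S(s) = L (sI + L)⁻¹ M` of the single-integrator network. -/
def singleS {N m : ℕ} (L : Matrix (Fin N) (Fin N) ℝ) (M : Matrix (Fin N) (Fin m) ℝ)
    (s : ℂ) : Matrix (Fin N) (Fin m) ℂ :=
  cplx L * (s • (1 : Matrix (Fin N) (Fin N) ℂ) + cplx L)⁻¹ * cplx M

/-- Transfer function `Ŝ(s) = LP (sI + L̂)⁻¹ M̂` of the reduced single-integrator network. -/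
def singleShat {N m k : ℕ} (L : Matrix (Fin N) (Fin N) ℝ) (P : Matrix (Fin N) (Fin k) ℝ)
    (Lhat : Matrix (Fin k) (Fin k) ℝ) (Mhat : Matrix (Fin k) (Fin m) ℝ) (s : ℂ) :
    Matrix (Fin N) (Fin m) ℂ :=
  cplx (L * P) * (s • (1 : Matrix (Fin k) (Fin k) ℂ) + cplx Lhat)⁻¹ * cplx Mhat

/-- Squared Frobenius norm `‖M‖_F² = tr(MᵀM)`. -/
def frobSq {α β : Type*} [Fintype α] [Fintype β] (M : Matrix α β ℝ) : ℝ := (Mᵀ * M).trace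

end

noncomputable section

lemma sig_le {n m : ℕ} (X : Matrix (Fin n) (Fin m) ℂ) (C : ℝ) (hC : 0 ≤ C)
    (h : ∀ u : Fin m → ℂ, ‖WithLp.toLp 2 (X *ᵥ u)‖ ≤ C * ‖WithLp.toLp 2 u‖) : sigmaMax X ≤ C := by
  refine ContinuousLinearMap.opNorm_le_bound _ hC fun x => ?_
  exact h x.ofLp

lemma le_sig {n m : ℕ} (X : Matrix (Fin n) (Fin m) ℂ) (u : Fin m → ℂ) :
    ‖WithLp.toLp 2 (X *ᵥ u)‖ ≤ sigmaMax X * ‖WithLp.toLp 2 u‖ :=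
  ContinuousLinearMap.le_opNorm (LinearMap.toContinuousLinearMap (Matrix.toEuclideanLin X)) (WithLp.toLp 2 u)

lemma sig_nonneg {n m : ℕ} (X : Matrix (Fin n) (Fin m) ℂ) : 0 ≤ sigmaMax X := norm_nonneg _

lemma nsq {n : ℕ} (x : Fin n → ℂ) : ‖WithLp.toLp 2 x‖ ^ 2 = (star x ⬝ᵥ x).re := by
  rw [EuclideanSpace.norm_sq_eq]
  simp [dotProduct, Complex.sq_norm, Complex.normSq_apply]

lemma cplx_mul {a b c : ℕ} (X : Matrix (Fin a) (Fin b) ℝ) (Y : Matrix (Fin b) (Fin c) ℝ) :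
    cplx (X * Y) = cplx X * cplx Y := by
  ext i j; simp [cplx, Matrix.mul_apply]

lemma cplx_sub {a b : ℕ} (X Y : Matrix (Fin a) (Fin b) ℝ) :
    cplx (X - Y) = cplx X - cplx Y := by
  ext i j; simp [cplx]

lemma cplx_add {a b : ℕ} (X Y : Matrix (Fin a) (Fin b) ℝ) :
    cplx (X + Y) = cplx X + cplx Y := by
  ext i j; simp [cplx]

lemma cplx_one {a : ℕ} : cplx (1 : Matrix (Fin a) (Fin a) ℝ) = 1 := by
  ext i j; simp [cplx, Matrix.one_apply]; split_ifs <;> simp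

lemma cplx_ct {a b : ℕ} (X : Matrix (Fin a) (Fin b) ℝ) : (cplx X)ᴴ = cplx Xᵀ := by
  ext i j; simp [cplx]

lemma nsq_mulVec {n m : ℕ} (X : Matrix (Fin n) (Fin m) ℝ) (u : Fin m → ℂ) :
    ‖WithLp.toLp 2 (cplx X *ᵥ u)‖ ^ 2 = (star u ⬝ᵥ (cplx (Xᵀ * X) *ᵥ u)).re := by
  rw [nsq, star_mulVec, ← dotProduct_mulVec, cplx_ct, mulVec_mulVec, cplx_mul]

/-- key identity -/
lemma nsq_A {n : ℕ} (L : Matrix (Fin n) (Fin n) ℝ) (hL : Lᵀ = L) (w : ℝ) (x : Fin n → ℂ) :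
    ‖WithLp.toLp 2 ((((w : ℂ) * Complex.I) • (1 : Matrix (Fin n) (Fin n) ℂ) + cplx L) *ᵥ x)‖ ^ 2
      = w ^ 2 * ‖WithLp.toLp 2 x‖ ^ 2 + ‖WithLp.toLp 2 (cplx L *ᵥ x)‖ ^ 2 := by
  have h : (star (cplx L *ᵥ x) ⬝ᵥ x) = star x ⬝ᵥ (cplx L *ᵥ x) := by
    rw [star_mulVec, ← dotProduct_mulVec, cplx_ct, hL]
  rw [nsq, nsq, nsq, add_mulVec, smul_mulVec, one_mulVec, star_add, add_dotProduct, dotProduct_add,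
    dotProduct_add, star_smul, smul_dotProduct, smul_dotProduct, dotProduct_smul, dotProduct_smul, h]
  simp
  ring

lemma A_unit {n : ℕ} (L : Matrix (Fin n) (Fin n) ℝ) (hL : Lᵀ = L) (w : ℝ) (hw : w ≠ 0) :
    IsUnit (((w : ℂ) * Complex.I) • (1 : Matrix (Fin n) (Fin n) ℂ) + cplx L).det := by
  rw [isUnit_iff_ne_zero]
  intro h
  obtain ⟨x, hx, h0⟩ := Matrix.exists_mulVec_eq_zero_iff.mpr h
  have := nsq_A L hL w x
  rw [h0] at this
  simp only [WithLp.toLp_zero, norm_zero] at this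
  have h1 : 0 < ‖WithLp.toLp 2 x‖ := by
    rw [norm_pos_iff]; simpa using hx
  have : 0 < w ^ 2 * ‖WithLp.toLp 2 x‖ ^ 2 := by positivity
  nlinarith [sq_nonneg ‖WithLp.toLp 2 (cplx L *ᵥ x)‖]

lemma contr {n : ℕ} (L : Matrix (Fin n) (Fin n) ℝ) (hL : Lᵀ = L) (w : ℝ) (hw : w ≠ 0)
    (y : Fin n → ℂ) :
    ‖WithLp.toLp 2 ((cplx L * (((w : ℂ) * Complex.I) • (1 : Matrix (Fin n) (Fin n) ℂ) + cplx L)⁻¹) *ᵥ y)‖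
      ≤ ‖WithLp.toLp 2 y‖ := by
  have hu := A_unit L hL w hw
  set A := ((w : ℂ) * Complex.I) • (1 : Matrix (Fin n) (Fin n) ℂ) + cplx L with hA
  have := nsq_A L hL w (A⁻¹ *ᵥ y)
  rw [← hA, mulVec_mulVec, mul_nonsing_inv _ hu, one_mulVec, mulVec_mulVec] at this
  refine le_of_sq_le_sq ?_ (norm_nonneg _)
  rw [this]
  have : 0 ≤ w ^ 2 * ‖WithLp.toLp 2 (A⁻¹ *ᵥ y)‖ ^ 2 := by positivity
  linarith

lemma hat_unit {n k : ℕ} (L : Matrix (Fin n) (Fin n) ℝ) (hL : Lᵀ = L)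
    (P : Matrix (Fin n) (Fin k) ℝ) (Q : Matrix (Fin k) (Fin n) ℝ) (hQ : Q * P = 1)
    (Lh : Matrix (Fin k) (Fin k) ℝ) (h : L * P = P * Lh) (s : ℂ)
    (hu : IsUnit (s • (1 : Matrix (Fin n) (Fin n) ℂ) + cplx L).det) :
    IsUnit (s • (1 : Matrix (Fin k) (Fin k) ℂ) + cplx Lh).det := by
  set A := s • (1 : Matrix (Fin n) (Fin n) ℂ) + cplx L with hA
  set B := s • (1 : Matrix (Fin k) (Fin k) ℂ) + cplx Lh with hB
  have hAB : A * cplx P = cplx P * B := by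
    rw [hA, hB, Matrix.add_mul, Matrix.mul_add, ← cplx_mul, ← cplx_mul, h]; simp
  have h1 : (cplx Q * A⁻¹ * cplx P) * B = 1 := by
    rw [Matrix.mul_assoc, ← hAB, Matrix.mul_assoc, ← Matrix.mul_assoc A⁻¹, nonsing_inv_mul _ hu, Matrix.one_mul, ← cplx_mul, hQ,
      cplx_one]
  exact (isUnit_iff_isUnit_det _).mp (IsUnit.of_mul_eq_one_right _ h1)

lemma diff_eq {n k m : ℕ} (L : Matrix (Fin n) (Fin n) ℝ) (hL : Lᵀ = L)
    (P : Matrix (Fin n) (Fin k) ℝ) (Q : Matrix (Fin k) (Fin n) ℝ) (hQ : Q * P = 1)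
    (Lh : Matrix (Fin k) (Fin k) ℝ) (h : L * P = P * Lh) (s : ℂ)
    (M : Matrix (Fin n) (Fin m) ℝ) (Mh : Matrix (Fin k) (Fin m) ℝ)
    (hu : IsUnit (s • (1 : Matrix (Fin n) (Fin n) ℂ) + cplx L).det) :
    singleS L M s - singleShat L P Lh Mh s =
      cplx L * (s • (1 : Matrix (Fin n) (Fin n) ℂ) + cplx L)⁻¹ * cplx (M - P * Mh) := by
  have hu2 := hat_unit L hL P Q hQ Lh h s hu
  unfold singleS singleShat
  set A := s • (1 : Matrix (Fin n) (Fin n) ℂ) + cplx L with hA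
  set B := s • (1 : Matrix (Fin k) (Fin k) ℂ) + cplx Lh with hB
  have hAB : A * cplx P = cplx P * B := by
    rw [hA, hB, Matrix.add_mul, Matrix.mul_add, ← cplx_mul, ← cplx_mul, h]; simp
  have h2 : cplx P * B⁻¹ = A⁻¹ * cplx P := by
    calc cplx P * B⁻¹ = (A⁻¹ * A) * cplx P * B⁻¹ := by rw [nonsing_inv_mul _ hu, Matrix.one_mul]
      _ = A⁻¹ * cplx P * (B * B⁻¹) := by rw [Matrix.mul_assoc A⁻¹, hAB]; simp only [Matrix.mul_assoc]
      _ = _ := by rw [mul_nonsing_inv _ hu2, Matrix.mul_one]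
  rw [cplx_sub, Matrix.mul_sub, cplx_mul, cplx_mul, Matrix.mul_assoc (cplx L) (cplx P), h2]
  simp only [Matrix.mul_assoc]

lemma exists_pre {n m : ℕ} (hn : 0 < n) (L : Matrix (Fin n) (Fin n) ℝ) (hL : Lᵀ = L)
    (hker : LinearMap.ker L.mulVecLin = Submodule.span ℝ {(fun _ => 1 : Fin n → ℝ)})
    (hL1 : L.mulVec (fun _ => 1) = 0)
    (Z : Matrix (Fin n) (Fin m) ℝ) (hZ : (fun _ => 1) ᵥ* Z = 0) :
    ∃ W : Matrix (Fin n) (Fin m) ℝ, Z = L * W := by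
  have h1L : (fun _ => 1) ᵥ* L = 0 := by rw [← mulVec_transpose, hL, hL1]
  set J : Matrix (Fin n) (Fin n) ℝ := Matrix.of fun _ _ => 1 with hJ
  have hJv : ∀ x : Fin n → ℝ, J *ᵥ x = fun _ => ∑ i, x i := by
    intro x; ext i; simp [J, mulVec, dotProduct]
  have h1J : (fun _ => 1) ᵥ* J = fun _ => (n : ℝ) := by
    ext i; simp [J, vecMul, dotProduct]
  have hn' : (n : ℝ) ≠ 0 := by positivity
  have hu : IsUnit (L + J).det := by
    rw [isUnit_iff_ne_zero]
    intro h
    obtain ⟨x, hx, h0⟩ := Matrix.exists_mulVec_eq_zero_iff.mpr h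
    have h2 : (fun _ => 1) ⬝ᵥ ((L + J) *ᵥ x) = 0 := by rw [h0]; simp
    rw [dotProduct_mulVec, vecMul_add, h1L, h1J, zero_add] at h2
    have h3 : ∑ i, x i = 0 := by
      simp only [dotProduct, ← Finset.mul_sum] at h2
      exact (mul_eq_zero.mp h2).resolve_left hn'
    have h4 : L *ᵥ x = 0 := by
      rw [add_mulVec, hJv, h3] at h0
      simpa [← Pi.zero_def] using h0
    have h5 : x ∈ LinearMap.ker L.mulVecLin := by simpa using h4
    rw [hker, Submodule.mem_span_singleton] at h5
    obtain ⟨a, rfl⟩ := h5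
    simp [hn'] at h3
    exact hx (by simp [h3])
  refine ⟨(L + J)⁻¹ * Z, ?_⟩
  obtain ⟨W, hW⟩ : ∃ W : Matrix (Fin n) (Fin m) ℝ, W = (L + J)⁻¹ * Z := ⟨_, rfl⟩
  rw [← hW]
  have hWZ : (L + J) * W = Z := by rw [hW, ← Matrix.mul_assoc, mul_nonsing_inv _ hu, Matrix.one_mul]
  have h6 : (fun _ => (n : ℝ)) ᵥ* W = 0 := by
    rw [← hZ, ← hWZ, ← vecMul_vecMul, vecMul_add, h1L, h1J, zero_add]
  have h7 : J * W = 0 := by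
    ext i j
    have := congrFun h6 j
    simp only [vecMul, dotProduct, ← Finset.mul_sum, Pi.zero_apply] at this
    simpa [Matrix.mul_apply, J] using (mul_eq_zero.mp this).resolve_left hn'
  rw [← hWZ, Matrix.add_mul, h7, add_zero]

lemma hinf_eq {n m : ℕ} (L : Matrix (Fin n) (Fin n) ℝ) (hL : Lᵀ = L)
    (Z W : Matrix (Fin n) (Fin m) ℝ) (hZ : Z = L * W) (F : ℂ → Matrix (Fin n) (Fin m) ℂ)
    (h0 : F 0 = 0)
    (hF : ∀ w : ℝ, w ≠ 0 → F ((w : ℂ) * Complex.I) = cplx L *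
      (((w : ℂ) * Complex.I) • (1 : Matrix (Fin n) (Fin n) ℂ) + cplx L)⁻¹ * cplx Z) :
    HinfNorm F = sigmaMax (cplx Z) := by
  have hb : ∀ w : ℝ, sigmaMax (F ((w : ℂ) * Complex.I)) ≤ sigmaMax (cplx Z) := by
    intro w
    refine sig_le _ _ (sig_nonneg _) fun u => ?_
    by_cases hw : w = 0
    · subst hw
      simp only [Complex.ofReal_zero, zero_mul, h0, zero_mulVec, WithLp.toLp_zero, norm_zero]
      exact mul_nonneg (sig_nonneg _) (norm_nonneg _)
    · rw [hF w hw, ← mulVec_mulVec]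
      exact (contr L hL w hw _).trans (le_sig _ _)
  refine le_antisymm (ciSup_le hb) ?_
  have hbd : BddAbove (Set.range fun w : ℝ => sigmaMax (F ((w : ℂ) * Complex.I))) :=
    ⟨_, by rintro _ ⟨w, rfl⟩; exact hb w⟩
  have hle : ∀ w : ℝ, sigmaMax (F ((w : ℂ) * Complex.I)) ≤ HinfNorm F := fun w => le_ciSup hbd w
  refine sig_le _ _ ((sig_nonneg _).trans (hle 0)) fun u => ?_
  refine le_of_forall_pos_le_add fun ε hε => ?_
  set q := cplx W *ᵥ u with hq
  have hw : (0:ℝ) < ε / (‖WithLp.toLp 2 q‖ + 1) := by positivity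
  set w := ε / (‖WithLp.toLp 2 q‖ + 1) with hwd
  have hu := A_unit L hL w hw.ne'
  have h1 := (le_sig (F ((w : ℂ) * Complex.I)) u).trans
    (mul_le_mul_of_nonneg_right (hle w) (norm_nonneg _))
  have h2 := contr L hL w hw.ne' q
  rw [hF w hw.ne', ← mulVec_mulVec] at h1
  set A := ((w : ℂ) * Complex.I) • (1 : Matrix (Fin n) (Fin n) ℂ) + cplx L with hA
  have h3 : cplx Z *ᵥ u = (cplx L * A⁻¹) *ᵥ (cplx Z *ᵥ u) +
      ((w : ℂ) * Complex.I) • ((cplx L * A⁻¹) *ᵥ q) := by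
    have : cplx Z *ᵥ u = cplx L *ᵥ q := by rw [hZ, cplx_mul, ← mulVec_mulVec]
    rw [this]
    have h4 : ((w : ℂ) * Complex.I) • ((cplx L * A⁻¹) *ᵥ q) =
      (cplx L * A⁻¹) *ᵥ (((w : ℂ) * Complex.I) • (1 : Matrix (Fin n) (Fin n) ℂ) *ᵥ q) := by
      rw [one_mulVec, mulVec_smul]
    rw [h4, ← mulVec_add, ← smul_mulVec, ← add_mulVec, add_comm (cplx L), ← hA, mulVec_mulVec q,
      Matrix.mul_assoc, nonsing_inv_mul _ hu, Matrix.mul_one]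
  rw [h3, WithLp.toLp_add, WithLp.toLp_smul]
  refine (norm_add_le _ _).trans (add_le_add h1 ?_)
  rw [norm_smul]
  have : ‖(w : ℂ) * Complex.I‖ = w := by simp [abs_of_pos hw]
  rw [this]
  calc w * _ ≤ w * (‖WithLp.toLp 2 q‖ + 1) := by
        refine mul_le_mul_of_nonneg_left ?_ hw.le
        linarith
    _ = ε := by rw [hwd]; field_simp

end

lemma nsq_le {n m : ℕ} (X : Matrix (Fin n) (Fin m) ℂ) (u : Fin m → ℂ) :
    ‖WithLp.toLp 2 (X *ᵥ u)‖ ^ 2 ≤ sigmaMax X ^ 2 * ‖WithLp.toLp 2 u‖ ^ 2 := by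
  rw [← mul_pow]
  exact pow_le_pow_left₀ (norm_nonneg _) (le_sig X u) 2

lemma sig_sq_le {n m : ℕ} (X : Matrix (Fin n) (Fin m) ℂ) (C : ℝ) (hC : 0 ≤ C)
    (h : ∀ u : Fin m → ℂ, ‖WithLp.toLp 2 (X *ᵥ u)‖ ^ 2 ≤ C * ‖WithLp.toLp 2 u‖ ^ 2) :
    sigmaMax X ^ 2 ≤ C := by
  have : sigmaMax X ≤ Real.sqrt C := by
    refine sig_le _ _ (Real.sqrt_nonneg _) fun u => ?_
    refine le_of_sq_le_sq ?_ (by positivity)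
    rw [mul_pow, Real.sq_sqrt hC]
    exact h u
  calc sigmaMax X ^ 2 ≤ Real.sqrt C ^ 2 := pow_le_pow_left₀ (sig_nonneg X) this 2
    _ = C := Real.sq_sqrt hC

lemma sq_diag {n m : ℕ} (hm : 0 < m) (Z : Matrix (Fin n) (Fin m) ℝ) (d : Fin m → ℝ)
    (hd : ∀ i, 0 ≤ d i) (hZ : Zᵀ * Z = diagonal d) : sigmaMax (cplx Z) ^ 2 = ⨆ i, d i := by
  have hf : ∀ u : Fin m → ℂ, ‖WithLp.toLp 2 (cplx Z *ᵥ u)‖ ^ 2 = ∑ i, d i * ‖u i‖ ^ 2 := by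
    intro u
    have : cplx (diagonal d) = diagonal fun i => (d i : ℂ) := by
      ext i j
      by_cases h : i = j <;> simp [cplx, h]
    rw [nsq_mulVec, hZ, this]
    simp only [dotProduct, mulVec_diagonal, Complex.re_sum]
    refine Finset.sum_congr rfl fun i _ => ?_
    simp [Complex.sq_norm, Complex.normSq_apply]
    ring
  haveI : Nonempty (Fin m) := ⟨⟨0, hm⟩⟩
  have hbd : BddAbove (Set.range d) := (Set.finite_range d).bddAbove
  apply le_antisymm
  · refine sig_sq_le _ _ ((hd ⟨0, hm⟩).trans (le_ciSup hbd _)) fun u => ?_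
    rw [hf, EuclideanSpace.norm_sq_eq, Finset.mul_sum]
    exact Finset.sum_le_sum fun i _ =>
      mul_le_mul_of_nonneg_right (le_ciSup hbd i) (sq_nonneg _)
  · refine ciSup_le fun i => ?_
    have h := nsq_le (cplx Z) (Pi.single i 1)
    rw [hf, EuclideanSpace.norm_sq_eq] at h
    simpa [Pi.single_apply, apply_ite, ite_pow] using h


/-- exact H∞ error for the single-integrator network clustered according to
an almost equitable partition. -/
theorem stmt12 {N k m : ℕ} (hm : 0 < m) (L : Matrix (Fin N) (Fin N) ℝ)
    (hLpsd : L.PosSemidef) (hL1 : L.mulVec (fun _ => 1) = 0)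
    (hLker : LinearMap.ker L.mulVecLin = Submodule.span ℝ {(fun _ => 1 : Fin N → ℝ)})
    (v : Fin m → Fin N) (hv : Function.Injective v)
    (M : Matrix (Fin N) (Fin m) ℝ)
    (hM : M = Matrix.of fun i j => if i = v j then 1 else 0)
    (c : Fin N → Fin k) (hc : Function.Surjective c)
    (P : Matrix (Fin N) (Fin k) ℝ)
    (hP : P = Matrix.of fun i j => if c i = j then 1 else 0)
    (hAEP : Submodule.map L.mulVecLin (LinearMap.range P.mulVecLin) ≤
      LinearMap.range P.mulVecLin)
    (Lhat : Matrix (Fin k) (Fin k) ℝ) (hLhat : Lhat = (Pᵀ * P)⁻¹ * (Pᵀ * L * P))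
    (Mhat : Matrix (Fin k) (Fin m) ℝ) (hMhat : Mhat = (Pᵀ * P)⁻¹ * (Pᵀ * M)) :
    (Function.Injective (fun i => c (v i)) →
      HinfNorm (fun s => singleS L M s - singleShat L P Lhat Mhat s) ^ 2 =
        ⨆ i : Fin m,
          (1 - 1 / ((Finset.univ.filter fun j : Fin N => c j = c (v i)).card : ℝ))) ∧
    (¬ Function.Injective (fun i => c (v i)) →
      HinfNorm (fun s => singleS L M s - singleShat L P Lhat Mhat s) ^ 2 = 1) := by
  have hN : 0 < N := (v ⟨0, hm⟩).pos
  have hL : Lᵀ = L := by simpa using hLpsd.1.eq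
  set n : Fin k → ℝ := fun j => ((Finset.univ.filter fun i : Fin N => c i = j).card : ℝ) with hn
  have hn1 : ∀ j, 1 ≤ n j := by
    intro j
    obtain ⟨i, hi⟩ := hc j
    have : 0 < (Finset.univ.filter fun i : Fin N => c i = j).card :=
      Finset.card_pos.mpr ⟨i, by simp [hi]⟩
    simp only [hn]
    exact_mod_cast this
  have hn0 : ∀ j, n j ≠ 0 := fun j => by linarith [hn1 j]
  have hPP : Pᵀ * P = diagonal n := by
    ext i j
    simp only [hP, Matrix.mul_apply, transpose_apply, of_apply, diagonal_apply, hn]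
    split_ifs with h
    · subst h
      rw [Finset.card_filter, Nat.cast_sum]
      refine Finset.sum_congr rfl fun x _ => ?_
      by_cases h1 : c x = i <;> simp [h1]
    · refine Finset.sum_eq_zero fun x _ => ?_
      by_cases h1 : c x = i
      · simp [h1, h]
      · simp [h1]
  have hinv : (Pᵀ * P)⁻¹ = diagonal fun j => (n j)⁻¹ := by
    apply inv_eq_right_inv
    rw [hPP, diagonal_mul_diagonal, ← diagonal_one]
    congr 1; ext j; exact mul_inv_cancel₀ (hn0 j)
  have hI : (Pᵀ * P)⁻¹ * (Pᵀ * P) = 1 := by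
    rw [hinv, hPP, diagonal_mul_diagonal, ← diagonal_one]
    congr 1; ext j; exact inv_mul_cancel₀ (hn0 j)
  have hI' : (Pᵀ * P) * (Pᵀ * P)⁻¹ = 1 := mul_eq_one_comm.mp hI
  have hQP : ((Pᵀ * P)⁻¹ * Pᵀ) * P = 1 := by rw [Matrix.mul_assoc, hI]
  have hLP : L * P = P * Lhat := by
    have h1 : ∀ j, ∃ x : Fin k → ℝ, P *ᵥ x = L *ᵥ (P.col j) := by
      intro j
      have : L *ᵥ (P.col j) ∈ LinearMap.range P.mulVecLin := by
        refine hAEP ⟨P.col j, ⟨Pi.single j 1, ?_⟩, rfl⟩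
        simp
      simpa using this
    choose X hX using h1
    have h2 : L * P = P * (Matrix.of fun i j => X j i) := by
      ext i j
      exact (congrFun (hX j) i).symm
    rw [hLhat, Matrix.mul_assoc Pᵀ, h2, ← Matrix.mul_assoc Pᵀ, ← Matrix.mul_assoc _ (Pᵀ * P), hI,
      Matrix.one_mul]
  have hP1 : P *ᵥ (fun _ => 1) = fun _ => 1 := by
    ext i; simp [hP, mulVec, dotProduct]
  have hLh1 : Lhat *ᵥ (fun _ => 1) = 0 := by
    have : P *ᵥ (Lhat *ᵥ (fun _ => 1)) = 0 := by
      rw [mulVec_mulVec, ← hLP, ← mulVec_mulVec, hP1, hL1]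
    have h2 := congrArg (fun x => ((Pᵀ * P)⁻¹ * Pᵀ) *ᵥ x) this
    simpa only [mulVec_mulVec, ← Matrix.mul_assoc, hQP, Matrix.one_mul, mulVec_zero] using h2
  have hk : 0 < k := (c (v ⟨0, hm⟩)).pos
  have hsing : ∀ (a : ℕ) (X : Matrix (Fin a) (Fin a) ℝ), 0 < a → X *ᵥ (fun _ => 1) = 0 →
      (cplx X)⁻¹ = 0 := by
    intro a X ha h
    apply nonsing_inv_apply_not_isUnit
    rw [isUnit_iff_ne_zero, not_not, ← Matrix.exists_mulVec_eq_zero_iff]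
    refine ⟨fun _ => 1, fun h0 => by simpa using congrFun h0 ⟨0, ha⟩, ?_⟩
    ext i
    have := congrFun h i
    simp only [mulVec, dotProduct, mul_one, Pi.zero_apply] at this
    simp only [mulVec, dotProduct, mul_one, Pi.zero_apply, cplx, Matrix.map_apply]
    exact_mod_cast this
  set Z := M - P * Mhat with hZ
  have hPM : Pᵀ * (P * Mhat) = Pᵀ * M := by
    rw [hMhat, ← Matrix.mul_assoc, ← Matrix.mul_assoc, hI', Matrix.one_mul]
  have hPZ : Pᵀ * Z = 0 := by rw [hZ, Matrix.mul_sub, hPM, sub_self]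
  have hZP : Zᵀ * P = 0 := by
    have := congrArg transpose hPZ
    simpa using this
  have h1Z : (fun _ => 1) ᵥ* Z = 0 := by
    rw [← hP1, ← vecMul_transpose, vecMul_vecMul, hPZ, vecMul_zero]
  obtain ⟨W, hW⟩ := exists_pre hN L hL hLker hL1 Z h1Z
  have hH : HinfNorm (fun s => singleS L M s - singleShat L P Lhat Mhat s) = sigmaMax (cplx Z) := by
    refine hinf_eq L hL Z W hW _ ?_ fun w hw => ?_
    · simp only [singleS, singleShat, zero_smul, zero_add, hsing N L hN hL1, hsing k Lhat hk hLh1,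
        Matrix.mul_zero, Matrix.zero_mul, sub_self]
    · exact diff_eq L hL P _ hQP Lhat hLP _ M Mhat (A_unit L hL w hw)
  rw [hH]
  have hMM : Mᵀ * M = 1 := by
    ext i j
    simp only [hM, Matrix.mul_apply, transpose_apply, of_apply, Matrix.one_apply]
    simp [hv.eq_iff, eq_comm]
  have hsplit : Zᵀ * Z = 1 - (P * Mhat)ᵀ * (P * Mhat) := by
    have hM' : M = Z + P * Mhat := by rw [hZ]; abel
    rw [← hMM, eq_sub_iff_add_eq]
    conv_rhs => rw [hM', transpose_add, Matrix.add_mul, Matrix.mul_add, Matrix.mul_add]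
    rw [← Matrix.mul_assoc Zᵀ, hZP, Matrix.transpose_mul, Matrix.mul_assoc _ Pᵀ Z, hPZ]
    simp
  have hPMe : Pᵀ * M = Matrix.of fun j i => if c (v i) = j then 1 else 0 := by
    ext j i
    simp [hP, hM, Matrix.mul_apply]
  have hMhe : ∀ j i, Mhat j i = if c (v i) = j then (n j)⁻¹ else 0 := by
    intro j i
    rw [hMhat, hPMe, hinv, diagonal_mul]
    simp
  refine ⟨fun hinj => ?_, fun hni => ?_⟩
  · refine sq_diag hm Z (fun i => 1 - 1 / n (c (v i))) (fun i => ?_) ?_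
    · have := hn1 (c (v i))
      rw [sub_nonneg, div_le_one (by linarith)]
      exact this
    · rw [hsplit, transpose_mul, Matrix.mul_assoc, hPM, hPMe]
      ext i l
      simp only [Matrix.sub_apply, Matrix.one_apply, Matrix.mul_apply, transpose_apply, of_apply, hMhe,
        diagonal_apply]
      by_cases h : i = l
      · subst h; simp
      · have : c (v i) ≠ c (v l) := fun h' => h (hinj h')
        simp [h, this]
  · have hns : ∀ u, ‖WithLp.toLp 2 (cplx Z *ᵥ u)‖ ^ 2 = ‖WithLp.toLp 2 u‖ ^ 2
        - ‖WithLp.toLp 2 (cplx (P * Mhat) *ᵥ u)‖ ^ 2 := by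
      intro u
      rw [nsq_mulVec, nsq_mulVec, nsq, hsplit, cplx_sub, cplx_one, sub_mulVec, one_mulVec,
        dotProduct_sub, Complex.sub_re]
    apply le_antisymm
    · refine sig_sq_le _ _ zero_le_one fun u => ?_
      rw [hns]
      nlinarith [sq_nonneg ‖WithLp.toLp 2 (cplx (P * Mhat) *ᵥ u)‖]
    · simp only [Injective, not_forall] at hni
      obtain ⟨i, l, hil, hne⟩ := hni
      set u : Fin m → ℂ := Pi.single i 1 - Pi.single l 1 with hu
      have h0 : cplx Mhat *ᵥ u = 0 := by
        ext j
        rw [hu, mulVec_sub]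
        simp [cplx, hMhe, hil]
      have h := nsq_le (cplx Z) u
      rw [hns, cplx_mul, ← mulVec_mulVec, h0] at h
      simp only [mulVec_zero, WithLp.toLp_zero, norm_zero] at h
      have hpos : 0 < ‖WithLp.toLp 2 u‖ := by
        rw [norm_pos_iff]
        intro h'
        have h2 : u = 0 := by simpa using h'
        have := congrFun h2 i
        simp [hu, hne] at this
      have : 0 < ‖WithLp.toLp 2 u‖ ^ 2 := by positivity
      nlinarith
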